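/- Let P ⊆ ℤ^n_{≥0} be a polymatroid over [n] with rank function f. Then for every integer i with 0 ≤ i < r_2(P), the coefficient of y^i in the exterior polynomial satisfies [y^i]X_P(y) = C(f([n])+i-1, i) − Σ_{j=0}^{i} C(f([n])+i-1-j, i-j)·|H_j(P)|, where C(·,·) denotes the binomial coefficient. -/

import Mathlib

open Finset Polynomial

/-- `f` is the rank function of a polymatroid over the ground set `[n]` (encoded as `Fin n`):
normalization, monotonicity and submodularity. -/
def IsPolymatroidRank (n : ℕ) (f : Finset (Fin n) → ℕ) : Prop :=
  f ∅ = 0 ∧ (∀ I J : Finset (Fin n), I ⊆ J → f I ≤ f J) ∧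
    ∀ I J : Finset (Fin n), f (I ∪ J) + f (I ∩ J) ≤ f I + f J

/-- The set of bases of the polymatroid `P ⊆ ℤ^n_{≥0}` with rank function `f`:
all nonnegative integer vectors `a` with `∑_{i ∈ I} a i ≤ f I` for every `I ⊆ [n]`
and `∑_{i ∈ [n]} a i = f [n]`.  (Every such vector has entries `≤ f [n]`, whence the
bounding box used to produce a `Finset`.) -/
def polyBases (n : ℕ) (f : Finset (Fin n) → ℕ) : Finset (Fin n → ℤ) :=
  ((Finset.univ : Finset (Fin n → Fin (f Finset.univ + 1))).image
      (fun a i => ((a i : ℕ) : ℤ))).filter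
    fun a => (∀ i, 0 ≤ a i) ∧ (∀ I : Finset (Fin n), ∑ i ∈ I, a i ≤ (f I : ℤ)) ∧
      ∑ i, a i = (f Finset.univ : ℤ)

/-- The externally active indices of a basis `a`: those `i` such that
`a + e_i - e_j ∉ P` for every `j < i`. -/
def extAct (n : ℕ) (f : Finset (Fin n) → ℕ) (a : Fin n → ℤ) : Finset (Fin n) :=
  Finset.univ.filter fun i => ∀ j, j < i →
    (fun t => a t + (if t = i then 1 else 0) - (if t = j then 1 else 0)) ∉ polyBases n f

/-- The internally active indices of a basis `a`: those `i` such that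
`a - e_i + e_j ∉ P` for every `j < i`. -/
def intAct (n : ℕ) (f : Finset (Fin n) → ℕ) (a : Fin n → ℤ) : Finset (Fin n) :=
  Finset.univ.filter fun i => ∀ j, j < i →
    (fun t => a t - (if t = i then 1 else 0) + (if t = j then 1 else 0)) ∉ polyBases n f

/-- The exterior polynomial `X_P(y) = ∑_{a ∈ P} y^(n - |Ext(a)|)`. -/
noncomputable def exteriorPoly (n : ℕ) (f : Finset (Fin n) → ℕ) : Polynomial ℤ :=
  ∑ a ∈ polyBases n f, X ^ (n - (extAct n f a).card)

/-- The interior polynomial `I_P(x) = ∑_{a ∈ P} x^(n - |Int(a)|)`. -/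
noncomputable def interiorPoly (n : ℕ) (f : Finset (Fin n) → ℕ) : Polynomial ℤ :=
  ∑ a ∈ polyBases n f, X ^ (n - (intAct n f a).card)

/-- `r_k(P) = min { n - |F| : F ⊆ [n], f F ≤ f [n] - k }` (junk value `0` if no such `F`). -/
noncomputable def rk (n : ℕ) (f : Finset (Fin n) → ℕ) (k : ℕ) : ℕ :=
  sInf {m | ∃ F : Finset (Fin n), (f F : ℤ) ≤ (f Finset.univ : ℤ) - k ∧ m = n - F.card}

/-- `r'_k(P) = min { |F| : F ⊆ [n], ∑_{i ∈ F} f {i} - f F ≥ k }` (junk value `0` if no such `F`). -/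
noncomputable def rk' (n : ℕ) (f : Finset (Fin n) → ℕ) (k : ℕ) : ℕ :=
  sInf {m | ∃ F : Finset (Fin n), (k : ℤ) ≤ (∑ i ∈ F, (f {i} : ℤ)) - (f F : ℤ) ∧ m = F.card}

/-- `H_j(P)`: the flats `H` (i.e. `f (H ∪ {e}) > f H` for all `e ∉ H`) with
`f H = f [n] - 1` and `n - |H| = j`. -/
def Hset (n : ℕ) (f : Finset (Fin n) → ℕ) (j : ℕ) : Finset (Finset (Fin n)) :=
  Finset.univ.filter fun H =>
    (∀ e, e ∉ H → f H < f (insert e H)) ∧ (f H : ℤ) = (f Finset.univ : ℤ) - 1 ∧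
      n - H.card = j

/-- `C_j(P)`: the sets `C` with `|C| = j`, `∑_{i ∈ C} f {i} - f C = 1` and
`∑_{i ∈ C \ {j'}} f {i} = f (C \ {j'})` for every `j' ∈ C`. -/
def Cset (n : ℕ) (f : Finset (Fin n) → ℕ) (j : ℕ) : Finset (Finset (Fin n)) :=
  Finset.univ.filter fun C => C.card = j ∧
    (∑ i ∈ C, (f {i} : ℤ)) - (f C : ℤ) = 1 ∧
    ∀ j' ∈ C, (∑ i ∈ C.erase j', (f {i} : ℤ)) = (f (C.erase j') : ℤ)

/-- The dual rank function `f*(I) = f([n] \ I) - f([n]) + ∑_{i ∈ I} f {i}`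
(the subtraction is exact for a polymatroid rank function). -/
def fdual (n : ℕ) (f : Finset (Fin n) → ℕ) : Finset (Fin n) → ℕ :=
  fun I => f (Finset.univ \ I) + (∑ i ∈ I, f {i}) - f Finset.univ

/-!
Let the coordinates of `c ∈ ℕⁿ` be independent geometric variables, `P(c t = k) = (1 - y)^k y`,
truncated at a height `D > f [n]` so that all probabilities are polynomials in `y`. Call `c`
spanning if it lies above a basis. As for Crapo's intervals in matroids, every spanning `c` lies
above exactly one basis `a` that agrees with `c` off `Ext(a)`, so `c` is spanning with probability
`∑_a (1 - y)^(f [n]) y^(n - |Ext(a)|) = (1 - y)^(f [n]) X_P(y)`.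

A vector with more than `i` coordinates below `D` has probability divisible by `y^(i+1)`. For
`i < r_2(P)`, any other vector is non-spanning iff it vanishes off a flat `H` of rank `f [n] - 1`,
which is then unique. The probability of vanishing off `H` is `y^(n - |H|)`, whence
`(1 - y)^(f [n]) X_P(y) ≡ 1 - ∑_H y^(n - |H|)` modulo `y^(i+1)`. The formula results from dividing
by `(1 - y)^(f [n])`.
-/

section GeometricWeight

variable {R ι : Type*} [CommRing R] (y : R) (D : ℕ)

/-- The probability that `min G D = k`, for a geometric variable `G` with `P(G = k) = (1 - y)^k y`,
as an element of an arbitrary commutative ring. Meaningful for `k ≤ D` only. -/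
def geomWeight (k : ℕ) : R :=
  if k < D then (1 - y) ^ k * y else (1 - y) ^ D

variable {D} in
lemma geomWeight_of_lt {k : ℕ} (hk : k < D) : geomWeight y D k = (1 - y) ^ k * y :=
  if_pos hk

variable {D} in
lemma sum_Icc_geomWeight {m : ℕ} (hm : m ≤ D) :
    ∑ k ∈ Icc m D, geomWeight y D k = (1 - y) ^ m := by
  induction hm using Nat.decreasingInduction with
  | self => simp [geomWeight]
  | of_succ k hk ih =>
    rw [← insert_Icc_succ_left_eq_Icc hk.le, sum_insert (by simp), Order.succ_eq_add_one, ih,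
      geomWeight_of_lt y hk]
    ring

variable [Fintype ι]

/-- The joint weight of a vector whose coordinates are independent truncated geometric
variables, see `geomWeight`. -/
def vecWeight (c : ι → ℕ) : R :=
  ∏ t, geomWeight y D (c t)

lemma pow_card_dvd_vecWeight (c : ι → ℕ) : y ^ #{t | c t < D} ∣ vecWeight y D c := by
  calc y ^ #{t | c t < D} = ∏ t with c t < D, y := (prod_const y).symm
    _ ∣ ∏ t with c t < D, geomWeight y D (c t) :=
      prod_dvd_prod_of_dvd _ _ fun t ht =>
        (dvd_mul_left y _).trans (geomWeight_of_lt y (mem_filter.1 ht).2).symm.dvd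
    _ ∣ vecWeight y D c := prod_dvd_prod_of_subset _ _ _ (filter_subset _ _)

variable [DecidableEq ι]

/-- The truncation at height `D` of the cell `a + ℕ^S`. -/
def truncCell (S : Finset ι) (a : ι → ℕ) : Finset (ι → ℕ) :=
  Icc a (S.piecewise (fun _ => D) a)

variable {y D} {S : Finset ι} {a c : ι → ℕ}

lemma mem_truncCell (ha : ∀ t, a t ≤ D) :
    c ∈ truncCell D S a ↔ (∀ t, c t ≤ D) ∧ (∀ t, a t ≤ c t) ∧ ∀ t ∉ S, c t = a t := by
  simp only [truncCell, mem_Icc, Pi.le_def, piecewise]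
  grind

lemma mem_truncCell_univ_zero : c ∈ truncCell D univ 0 ↔ ∀ t, c t ≤ D := by
  simp [mem_truncCell]

variable (y) in
lemma sum_vecWeight_truncCell (ha : ∀ t, a t < D) :
    ∑ c ∈ truncCell D S a, vecWeight y D c = (1 - y) ^ (∑ t, a t) * y ^ #Sᶜ := by
  have hcoord (t : ι) : ∑ k ∈ Icc (a t) (S.piecewise (fun _ => D) a t), geomWeight y D k =
      (1 - y) ^ a t * if t ∈ S then 1 else y := by
    by_cases ht : t ∈ S
    · simp [ht, sum_Icc_geomWeight y (ha t).le]
    · simp [ht, geomWeight_of_lt y (ha t)]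
  calc ∑ c ∈ truncCell D S a, vecWeight y D c
      = ∏ t, ∑ k ∈ Icc (a t) (S.piecewise (fun _ => D) a t), geomWeight y D k :=
        (prod_univ_sum _ _).symm
    _ = (1 - y) ^ (∑ t, a t) * y ^ #Sᶜ := by
        simp only [hcoord, prod_mul_distrib, prod_pow_eq_pow_sum, prod_ite, prod_const, one_pow,
          one_mul, filter_notMem_eq_sdiff, compl_eq_univ_sdiff]

end GeometricWeight

section PowerSeries

variable {R : Type*} [CommRing R]

lemma invOneSubPow_val_eq_mk_multichoose (d : ℕ) :
    (PowerSeries.invOneSubPow R d).val = PowerSeries.mk fun m => (d.multichoose m : R) := by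
  ext m
  cases d with
  | zero => cases m <;> simp [PowerSeries.invOneSubPow_zero, PowerSeries.coeff_one]
  | succ d =>
    rw [PowerSeries.invOneSubPow_val_succ_eq_mk_add_choose, PowerSeries.coeff_mk,
      PowerSeries.coeff_mk, Nat.multichoose_eq, Nat.add_right_comm, Nat.add_sub_cancel,
      Nat.choose_symm_add]

lemma coeff_eq_sum_mul_multichoose_of_dvd {p q : R[X]} {d i : ℕ}
    (h : X ^ (i + 1) ∣ (1 - X) ^ d * p - q) :
    p.coeff i = ∑ j ∈ range (i + 1), q.coeff j * (d.multichoose (i - j) : R) := by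
  obtain ⟨r, hr⟩ := h
  let u : (PowerSeries R)ˣ := PowerSeries.invOneSubPow R d
  have hr_coe : u.inv * (p : PowerSeries R) - (q : PowerSeries R) =
      PowerSeries.X ^ (i + 1) * (r : PowerSeries R) := by
    rw [PowerSeries.invOneSubPow_inv_eq_one_sub_pow]
    simpa using congrArg (fun g : R[X] => (g : PowerSeries R)) hr
  have hp : (p : PowerSeries R) = (q : PowerSeries R) * u.val +
      PowerSeries.X ^ (i + 1) * ((r : PowerSeries R) * u.val) := by
    linear_combination u.val * hr_coe - (p : PowerSeries R) * u.val_inv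
  rw [← p.coeff_coe, hp, map_add, PowerSeries.coeff_X_pow_mul', if_neg (Nat.not_succ_le_self i),
    add_zero, invOneSubPow_val_eq_mk_multichoose, PowerSeries.coeff_mul,
    Nat.sum_antidiagonal_eq_sum_range_succ fun j m => PowerSeries.coeff j (q : PowerSeries R) *
      PowerSeries.coeff m (PowerSeries.mk fun m => (d.multichoose m : R))]
  simp only [coeff_coe, PowerSeries.coeff_mk]

end PowerSeries

section Polymatroid

variable {n : ℕ} {f : Finset (Fin n) → ℕ}

lemma IsPolymatroidRank.mono (hf : IsPolymatroidRank n f) : Monotone f :=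
  fun I J => hf.2.1 I J

/-- The integer vectors bounded by `f` on every subset; unlike bases they may have negative
entries. -/
def IsSubmodularBounded (f : Finset (Fin n) → ℕ) (a : Fin n → ℤ) : Prop :=
  ∀ I : Finset (Fin n), ∑ t ∈ I, a t ≤ f I

/-- The sets on which the vector `a` attains the bound `f`. -/
def IsTight (f : Finset (Fin n) → ℕ) (a : Fin n → ℤ) (T : Finset (Fin n)) : Prop :=
  ∑ t ∈ T, a t = f T

lemma apply_le_of_isTight_univ {a : Fin n → ℤ} (ha_nonneg : ∀ t, 0 ≤ a t)
    (ha_univ : IsTight f a univ) (t : Fin n) : a t ≤ f univ :=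
  ha_univ ▸ single_le_sum (fun s _ => ha_nonneg s) (mem_univ t)

lemma mem_polyBases {a : Fin n → ℤ} :
    a ∈ polyBases n f ↔ (∀ t, 0 ≤ a t) ∧ IsSubmodularBounded f a ∧ IsTight f a univ := by
  simp only [polyBases, IsSubmodularBounded, IsTight, mem_filter, mem_image, mem_univ, true_and,
    and_iff_right_iff_imp]
  rintro ⟨ha_nonneg, -, ha_univ⟩
  refine ⟨fun t => ⟨(a t).toNat, ?_⟩, funext fun t => Int.toNat_of_nonneg (ha_nonneg t)⟩
  exact Nat.lt_succ_of_le (Int.toNat_le.2 (apply_le_of_isTight_univ ha_nonneg ha_univ t))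

lemma toNat_apply_le_of_mem_polyBases {a : Fin n → ℤ} (ha : a ∈ polyBases n f) (t : Fin n) :
    (a t).toNat ≤ f univ :=
  have ⟨ha_nonneg, _, ha_univ⟩ := mem_polyBases.1 ha
  Int.toNat_le.2 (apply_le_of_isTight_univ ha_nonneg ha_univ t)

lemma IsTight.union_and_inter (hf : IsPolymatroidRank n f) {a : Fin n → ℤ}
    (ha : IsSubmodularBounded f a) {I J : Finset (Fin n)} (hI : IsTight f a I)
    (hJ : IsTight f a J) : IsTight f a (I ∪ J) ∧ IsTight f a (I ∩ J) := by
  have hsubmod : (f (I ∪ J) : ℤ) + f (I ∩ J) ≤ f I + f J := mod_cast hf.2.2 I J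
  have hmod := sum_union_inter (s₁ := I) (s₂ := J) (f := a)
  have hunion := ha (I ∪ J)
  have hinter := ha (I ∩ J)
  simp only [IsTight] at hI hJ ⊢
  constructor <;> linarith

lemma IsSubmodularBounded.add_single {a : Fin n → ℤ} (ha : IsSubmodularBounded f a) {i : Fin n}
    (hi : ∀ T, IsTight f a T → i ∉ T) : IsSubmodularBounded f (a + Pi.single i 1) := by
  intro I
  have hI := ha I
  have hne : i ∈ I → ∑ t ∈ I, a t ≠ f I := fun hiI hT => hi I hT hiI
  simp only [Pi.add_apply, sum_add_distrib, sum_pi_single']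
  split_ifs with hiI
  · have := hne hiI
    omega
  · omega

lemma IsSubmodularBounded.add_single_sub_single {a : Fin n → ℤ} (ha : IsSubmodularBounded f a)
    {i j : Fin n} (hij : ∀ T, IsTight f a T → i ∈ T → j ∈ T) :
    IsSubmodularBounded f (a + Pi.single i 1 - Pi.single j 1) := by
  intro I
  have hI := ha I
  have hne : i ∈ I → j ∉ I → ∑ t ∈ I, a t ≠ f I := fun hiI hjI hT => hjI (hij I hT hiI)
  simp only [Pi.add_apply, Pi.sub_apply, sum_sub_distrib, sum_add_distrib, sum_pi_single']
  split_ifs with hiI hjI <;> grind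

lemma exists_exchange (hf : IsPolymatroidRank n f) {a b : Fin n → ℤ} (ha : a ∈ polyBases n f)
    (hb : b ∈ polyBases n f) {i : Fin n} (hi : a i < b i) :
    ∃ j, b j < a j ∧ a + Pi.single i 1 - Pi.single j 1 ∈ polyBases n f := by
  obtain ⟨ha_nonneg, ha_le, ha_univ⟩ := mem_polyBases.1 ha
  obtain ⟨hb_nonneg, hb_le, -⟩ := mem_polyBases.1 hb
  obtain ⟨T, hT⟩ := (Set.toFinite {T | IsTight f a T ∧ i ∈ T}).exists_minimal
    ⟨univ, ha_univ, mem_univ i⟩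
  have hT_least (T' : Finset (Fin n)) (hT' : IsTight f a T') (hi' : i ∈ T') : T ⊆ T' :=
    (hT.le_of_le ⟨(hT.prop.1.union_and_inter hf ha_le hT').2, mem_inter.2 ⟨hT.prop.2, hi'⟩⟩
      inter_subset_left).trans inter_subset_right
  obtain ⟨j, hjT, hj⟩ : ∃ j ∈ T, b j < a j := by
    by_contra! hle
    have hlt : ∑ t ∈ T, a t < ∑ t ∈ T, b t := sum_lt_sum hle ⟨i, hT.prop.2, hi⟩
    exact (hlt.trans_le (hb_le T)).ne hT.prop.1
  refine ⟨j, hj, mem_polyBases.2 ⟨fun t => ?_, ?_, ?_⟩⟩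
  · have := ha_nonneg t
    have := hb_nonneg j
    simp only [Pi.sub_apply, Pi.add_apply, Pi.single_apply]
    grind
  · exact ha_le.add_single_sub_single fun T' hT' hi' => hT_least T' hT' hi' hjT
  · simpa [IsTight, sum_add_distrib] using ha_univ

/-- The vectors meeting the rank condition for lying above some basis, see
`IsSpanning.exists_mem_polyBases_le`; for a matroid and `0/1` vectors these are the spanning
sets. -/
def IsSpanning (f : Finset (Fin n) → ℕ) (c : Fin n → ℕ) : Prop :=
  ∀ F : Finset (Fin n), f univ ≤ f F + ∑ t ∈ Fᶜ, c t

instance (f : Finset (Fin n) → ℕ) : DecidablePred (IsSpanning f) :=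
  fun c => inferInstanceAs (Decidable (∀ F : Finset (Fin n), f univ ≤ f F + ∑ t ∈ Fᶜ, c t))

lemma isSpanning_of_mem_polyBases_le {a : Fin n → ℤ} {c : Fin n → ℕ} (ha : a ∈ polyBases n f)
    (hac : ∀ t, a t ≤ c t) : IsSpanning f c := by
  obtain ⟨-, ha_le, ha_univ⟩ := mem_polyBases.1 ha
  intro F
  zify
  calc (f univ : ℤ) = ∑ t ∈ F, a t + ∑ t ∈ Fᶜ, a t := by
        rw [sum_add_sum_compl]
        exact ha_univ.symm
    _ ≤ f F + ∑ t ∈ Fᶜ, (c t : ℤ) := add_le_add (ha_le F) (sum_le_sum fun t _ => hac t)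

variable {c : Fin n → ℕ}

lemma IsSpanning.exists_mem_polyBases_le (hc : IsSpanning f c) (hf : IsPolymatroidRank n f) :
    ∃ a ∈ polyBases n f, ∀ t, a t ≤ c t := by
  obtain ⟨a, ha⟩ := ((Set.finite_Icc (0 : Fin n → ℤ) (fun t => c t)).inter_of_left
    {a | IsSubmodularBounded f a}).exists_maximal ⟨0, by simp [IsSubmodularBounded, Pi.le_def]⟩
  obtain ⟨⟨ha_nonneg, hac⟩, ha_le⟩ := ha.prop
  have exists_tight (t : Fin n) (ht : a t < c t) : ∃ T, IsTight f a T ∧ t ∈ T := by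
    by_contra! hno
    have hlt : a < a + Pi.single t 1 := lt_add_of_pos_right a (Pi.single_pos.2 one_pos)
    have hle (s : Fin n) : (a + Pi.single t 1 : Fin n → ℤ) s ≤ c s := by
      have := hac s
      simp only [Pi.add_apply, Pi.single_apply]
      grind
    exact ha.not_prop_of_gt hlt ⟨⟨ha_nonneg.trans hlt.le, hle⟩, ha_le.add_single hno⟩
  obtain ⟨T, hT⟩ := (Set.toFinite {T | IsTight f a T}).exists_maximal
    ⟨∅, by simp [IsTight, hf.1]⟩
  have hT_greatest (T' : Finset (Fin n)) (hT' : IsTight f a T') : T' ⊆ T :=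
    subset_union_right.trans
      (hT.le_of_ge (hT.prop.union_and_inter hf ha_le hT').1 subset_union_left)
  have hsat (t : Fin n) (ht : t ∈ Tᶜ) : a t = c t := by
    by_contra hne
    obtain ⟨T', hT', htT'⟩ := exists_tight t (lt_of_le_of_ne (hac t) hne)
    exact mem_compl.1 ht (hT_greatest T' hT' htT')
  refine ⟨a, mem_polyBases.2 ⟨ha_nonneg, ha_le, (ha_le univ).antisymm ?_⟩, hac⟩
  calc (f univ : ℤ) ≤ f T + ∑ t ∈ Tᶜ, (c t : ℤ) := mod_cast hc T
    _ = ∑ t ∈ T, a t + ∑ t ∈ Tᶜ, a t := by rw [hT.prop, sum_congr rfl hsat]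
    _ = ∑ t, a t := sum_add_sum_compl T a

lemma mem_extAct {a : Fin n → ℤ} {i : Fin n} :
    i ∈ extAct n f a ↔ ∀ j < i, a + Pi.single i 1 - Pi.single j 1 ∉ polyBases n f := by
  simp only [extAct, mem_filter, mem_univ, true_and]
  refine forall₂_congr fun j _ => not_congr (iff_of_eq (congrArg (· ∈ polyBases n f) ?_))
  ext t
  simp only [Pi.sub_apply, Pi.add_apply, Pi.single_apply]

lemma IsSpanning.exists_mem_polyBases_eq_off_extAct (hc : IsSpanning f c)
    (hf : IsPolymatroidRank n f) :
    ∃ a ∈ polyBases n f, (∀ t, a t ≤ c t) ∧ ∀ t ∉ extAct n f a, a t = c t := by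
  obtain ⟨a₀, ha₀, ha₀c⟩ := hc.exists_mem_polyBases_le hf
  obtain ⟨a, ha, hmax⟩ := exists_max_image {a ∈ polyBases n f | ∀ t, a t ≤ (c t : ℤ)} toColex
    ⟨a₀, mem_filter.2 ⟨ha₀, ha₀c⟩⟩
  obtain ⟨ha, hac⟩ := mem_filter.1 ha
  refine ⟨a, ha, hac, fun t ht => ?_⟩
  by_contra hne
  obtain ⟨j, hjt, hmem⟩ : ∃ j < t, a + Pi.single t 1 - Pi.single j 1 ∈ polyBases n f := by
    simpa [mem_extAct] using ht
  have hle (s : Fin n) : (a + Pi.single t 1 - Pi.single j 1 : Fin n → ℤ) s ≤ c s := by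
    have := hac s
    simp only [Pi.sub_apply, Pi.add_apply, Pi.single_apply]
    grind
  refine (hmax _ (mem_filter.2 ⟨hmem, hle⟩)).not_gt ⟨t, fun s hs => ?_, ?_⟩
  · simp [hs.ne', (hjt.trans hs).ne']
  · simp [hjt.ne']

lemma eq_of_eq_off_extAct (hf : IsPolymatroidRank n f) {a b : Fin n → ℤ}
    (ha : a ∈ polyBases n f) (hb : b ∈ polyBases n f) (hac : ∀ t, a t ≤ c t)
    (hbc : ∀ t, b t ≤ c t) (ha_off : ∀ t ∉ extAct n f a, a t = c t)
    (hb_off : ∀ t ∉ extAct n f b, b t = c t) : a = b := by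
  by_contra hne
  -- At the last coordinate `m` where they differ, an exchange uses some `j < m`: not active.
  obtain ⟨m, hm⟩ := (Set.toFinite {t | a t ≠ b t}).exists_maximal (Function.ne_iff.1 hne)
  have lt_of_ne {j : Fin n} (hj : a j ≠ b j) (hjm : j ≠ m) : j < m :=
    (lt_of_le_of_ne · hjm) (le_of_not_gt (hm.not_gt hj))
  wlog hlt : a m < b m generalizing a b
  · exact this hb ha hbc hac hb_off ha_off (Ne.symm hne) (by simpa [ne_comm] using hm)
      (fun hj => lt_of_ne hj.symm) (lt_of_le_of_ne (not_lt.1 hlt) hm.prop.symm)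
  obtain ⟨j, hj, hmem⟩ := exists_exchange hf ha hb hlt
  have hm_act : m ∈ extAct n f a := by
    by_contra hm_off
    exact (hlt.trans_le (hbc m)).ne (ha_off m hm_off)
  exact mem_extAct.1 hm_act j (lt_of_ne hj.ne' (by rintro rfl; exact hj.not_gt hlt)) hmem

/-- The part below height `D` of the cell `a + ℕ^Ext(a)` of the basis `a`. For a matroid this is
Crapo's interval of spanning sets `[B, B ∪ Ext(B)]`. -/
def extCell (f : Finset (Fin n) → ℕ) (D : ℕ) (a : Fin n → ℤ) : Finset (Fin n → ℕ) :=
  truncCell D (extAct n f a) fun t => (a t).toNat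

variable {D : ℕ}

lemma mem_extCell (hD : f univ ≤ D) {a : Fin n → ℤ} (ha : a ∈ polyBases n f) :
    c ∈ extCell f D a ↔
      (∀ t, c t ≤ D) ∧ (∀ t, a t ≤ c t) ∧ ∀ t ∉ extAct n f a, a t = c t := by
  rw [extCell, mem_truncCell fun t => (toNat_apply_le_of_mem_polyBases ha t).trans hD]
  have h_nonneg := (mem_polyBases.1 ha).1
  refine and_congr_right fun _ => and_congr (forall_congr' fun t => Int.toNat_le)
    (forall₂_congr fun t _ => ?_)
  have := h_nonneg t
  omega

lemma filter_isSpanning_eq_biUnion_extCell (hf : IsPolymatroidRank n f) (hD : f univ ≤ D) :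
    {c ∈ truncCell D univ (0 : Fin n → ℕ) | IsSpanning f c} =
      (polyBases n f).biUnion (extCell f D) := by
  ext c
  rw [mem_filter, mem_truncCell_univ_zero, mem_biUnion]
  constructor
  · rintro ⟨hcD, hc⟩
    obtain ⟨a, ha, hac, ha_off⟩ := hc.exists_mem_polyBases_eq_off_extAct hf
    exact ⟨a, ha, (mem_extCell hD ha).2 ⟨hcD, hac, ha_off⟩⟩
  · rintro ⟨a, ha, hca⟩
    obtain ⟨hcD, hac, -⟩ := (mem_extCell hD ha).1 hca
    exact ⟨hcD, isSpanning_of_mem_polyBases_le ha hac⟩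

lemma pairwiseDisjoint_extCell (hf : IsPolymatroidRank n f) (hD : f univ ≤ D) :
    (polyBases n f : Set (Fin n → ℤ)).PairwiseDisjoint (extCell f D) := by
  refine fun a ha b hb hne => disjoint_left.2 fun c hca hcb => hne ?_
  obtain ⟨-, hac, ha_off⟩ := (mem_extCell hD ha).1 hca
  obtain ⟨-, hbc, hb_off⟩ := (mem_extCell hD hb).1 hcb
  exact eq_of_eq_off_extAct hf ha hb hac hbc ha_off hb_off

variable {R : Type*} [CommRing R] (y : R)

lemma sum_vecWeight_extCell (hD : f univ < D) {a : Fin n → ℤ} (ha : a ∈ polyBases n f) :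
    ∑ c ∈ extCell f D a, vecWeight y D c = (1 - y) ^ f univ * y ^ #(extAct n f a)ᶜ := by
  obtain ⟨h_nonneg, -, h_sum⟩ := mem_polyBases.1 ha
  have hsum : ∑ t, (a t).toNat = f univ := by
    zify
    simpa only [Int.toNat_of_nonneg (h_nonneg _), IsTight] using h_sum
  rw [extCell, sum_vecWeight_truncCell y
    fun t => (toNat_apply_le_of_mem_polyBases ha t).trans_lt hD, hsum]

lemma sum_vecWeight_isSpanning (hf : IsPolymatroidRank n f) (hD : f univ < D) :
    ∑ c ∈ truncCell D univ 0 with IsSpanning f c, vecWeight y D c =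
      (1 - y) ^ f univ * ∑ a ∈ polyBases n f, y ^ #(extAct n f a)ᶜ := by
  rw [filter_isSpanning_eq_biUnion_extCell hf hD.le,
    sum_biUnion (pairwiseDisjoint_extCell hf hD.le), mul_sum]
  exact sum_congr rfl fun a ha => sum_vecWeight_extCell y hD ha

/-- The flats of corank one, that is, the union of all the sets `H_j(P)`. -/
def hyperplanes (f : Finset (Fin n) → ℕ) : Finset (Finset (Fin n)) :=
  {H | (∀ e ∉ H, f H < f (insert e H)) ∧ f H + 1 = f univ}

lemma mem_hyperplanes {H : Finset (Fin n)} :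
    H ∈ hyperplanes f ↔ (∀ e ∉ H, f H < f (insert e H)) ∧ f H + 1 = f univ := by
  simp [hyperplanes]

lemma exists_mem_hyperplanes_superset (hf : Monotone f) {F : Finset (Fin n)}
    (hF : f F + 1 = f univ) : ∃ H ∈ hyperplanes f, F ⊆ H := by
  obtain ⟨H, hH⟩ := (Set.toFinite {H | F ⊆ H ∧ f H = f F}).exists_maximal ⟨F, subset_rfl, rfl⟩
  obtain ⟨hFH, hfH⟩ := hH.prop
  refine ⟨H, mem_hyperplanes.2 ⟨fun e he => ?_, hfH ▸ hF⟩, hFH⟩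
  refine lt_of_le_of_ne (hf (subset_insert e H)) fun heq => he ?_
  exact hH.le_of_ge ⟨hFH.trans (subset_insert e H), heq ▸ hfH⟩ (subset_insert e H)
    (mem_insert_self e H)

lemma rank_union_eq_of_mem_hyperplanes (hf : Monotone f) {H H' : Finset (Fin n)}
    (hH : H ∈ hyperplanes f) (hH' : H' ∈ hyperplanes f) (hne : H ≠ H') :
    f (H ∪ H') = f univ := by
  wlog hsub : ¬H' ⊆ H generalizing H H'
  · rw [union_comm]
    exact this hH' hH hne.symm fun h => hne (h.antisymm (not_not.1 hsub))
  obtain ⟨e, he', he⟩ := not_subset.1 hsub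
  refine (hf (subset_univ _)).antisymm ?_
  calc f univ = f H + 1 := (mem_hyperplanes.1 hH).2.symm
    _ ≤ f (insert e H) := (mem_hyperplanes.1 hH).1 e he
    _ ≤ f (H ∪ H') := hf (insert_subset (mem_union_right H he') subset_union_left)

lemma rank_inter_add_two_le_of_mem_hyperplanes (hf : IsPolymatroidRank n f)
    {H H' : Finset (Fin n)} (hH : H ∈ hyperplanes f) (hH' : H' ∈ hyperplanes f) (hne : H ≠ H') :
    f (H ∩ H') + 2 ≤ f univ := by
  have hunion := rank_union_eq_of_mem_hyperplanes hf.mono hH hH' hne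
  have hsubmod := hf.2.2 H H'
  have hrank := (mem_hyperplanes.1 hH).2
  have hrank' := (mem_hyperplanes.1 hH').2
  omega

lemma IsSpanning.exists_ne_zero_of_mem_hyperplanes (hc : IsSpanning f c) {H : Finset (Fin n)}
    (hH : H ∈ hyperplanes f) : ∃ t ∉ H, c t ≠ 0 := by
  by_contra! hzero
  have hle := hc H
  rw [sum_eq_zero fun t ht => hzero t (mem_compl.1 ht), ← (mem_hyperplanes.1 hH).2] at hle
  omega

lemma exists_mem_hyperplanes_of_not_isSpanning (hf : IsPolymatroidRank n f)
    (hcorank : ∀ F, (∀ t ∉ F, c t < f univ) → f univ ≤ f F + 1) (hc : ¬IsSpanning f c) :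
    ∃ H ∈ hyperplanes f, ∀ t ∉ H, c t = 0 := by
  obtain ⟨F, hF⟩ : ∃ F, f F + ∑ t ∈ Fᶜ, c t < f univ := by simpa [IsSpanning] using hc
  have hle (t : Fin n) (ht : t ∉ F) : c t ≤ ∑ t ∈ Fᶜ, c t :=
    single_le_sum (fun _ _ => Nat.zero_le _) (mem_compl.2 ht)
  have hrank : f univ ≤ f F + 1 := hcorank F fun t ht => by
    have := hle t ht
    omega
  obtain ⟨H, hH, hFH⟩ := exists_mem_hyperplanes_superset hf.mono (F := F) (by omega)
  refine ⟨H, hH, fun t ht => ?_⟩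
  have := hle t fun htF => ht (hFH htF)
  omega

lemma eq_of_mem_hyperplanes_of_eq_zero (hf : IsPolymatroidRank n f)
    (hcorank : ∀ F, (∀ t ∉ F, c t < f univ) → f univ ≤ f F + 1) {H H' : Finset (Fin n)}
    (hH : H ∈ hyperplanes f) (hH' : H' ∈ hyperplanes f) (hzero : ∀ t ∉ H, c t = 0)
    (hzero' : ∀ t ∉ H', c t = 0) : H = H' := by
  by_contra hne
  have hinter := rank_inter_add_two_le_of_mem_hyperplanes hf hH hH' hne
  have hle := hcorank (H ∩ H') fun t ht => by grind
  omega

lemma card_hyperplanes_eq_zero_off (hf : IsPolymatroidRank n f)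
    (hcorank : ∀ F, (∀ t ∉ F, c t < f univ) → f univ ≤ f F + 1) :
    #{H ∈ hyperplanes f | ∀ t ∉ H, c t = 0} = if IsSpanning f c then 0 else 1 := by
  split_ifs with hc
  · rw [card_eq_zero, filter_eq_empty_iff]
    intro H hH hzero
    obtain ⟨t, ht, hne⟩ := hc.exists_ne_zero_of_mem_hyperplanes hH
    exact hne (hzero t ht)
  · obtain ⟨H, hH, hzero⟩ := exists_mem_hyperplanes_of_not_isSpanning hf hcorank hc
    refine card_eq_one.2 ⟨H, eq_singleton_iff_unique_mem.2 ⟨mem_filter.2 ⟨hH, hzero⟩, ?_⟩⟩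
    intro H' hH'
    obtain ⟨hH', hzero'⟩ := mem_filter.1 hH'
    exact eq_of_mem_hyperplanes_of_eq_zero hf hcorank hH' hH hzero' hzero

lemma sum_vecWeight_eq_zero_off (hD : 0 < D) (H : Finset (Fin n)) :
    ∑ c ∈ truncCell D univ 0 with ∀ t ∉ H, c t = 0, vecWeight y D c = y ^ #Hᶜ := by
  have hcell : {c ∈ truncCell D univ (0 : Fin n → ℕ) | ∀ t ∉ H, c t = 0} = truncCell D H 0 := by
    ext c
    simp [mem_truncCell]
  simpa [hcell] using sum_vecWeight_truncCell y (S := H) (a := 0) fun _ => hD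

lemma sum_vecWeight_mul_card_hyperplanes (hD : 0 < D) :
    ∑ c ∈ truncCell D univ 0, vecWeight y D c * #{H ∈ hyperplanes f | ∀ t ∉ H, c t = 0} =
      ∑ H ∈ hyperplanes f, y ^ #Hᶜ := by
  simp only [← sum_vecWeight_eq_zero_off y hD, sum_filter, card_filter, Nat.cast_sum, mul_sum,
    Nat.cast_ite, Nat.cast_one, Nat.cast_zero, mul_ite, mul_one, mul_zero]
  exact sum_comm

theorem pow_succ_dvd_one_sub_pow_mul_sum_sub (hf : IsPolymatroidRank n f) {i : ℕ}
    (hcorank : ∀ F : Finset (Fin n), #Fᶜ ≤ i → f univ ≤ f F + 1) :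
    y ^ (i + 1) ∣ (1 - y) ^ f univ * ∑ a ∈ polyBases n f, y ^ #(extAct n f a)ᶜ -
      (1 - ∑ H ∈ hyperplanes f, y ^ #Hᶜ) := by
  obtain ⟨D, hD⟩ := exists_gt (f univ)
  have hone : ∑ c ∈ truncCell D univ (0 : Fin n → ℕ), vecWeight y D c = 1 := by
    simpa using sum_vecWeight_truncCell y (S := univ) (a := (0 : Fin n → ℕ)) fun _ => hD.pos
  rw [← sum_vecWeight_isSpanning y hf hD, ← hone,
    ← sum_vecWeight_mul_card_hyperplanes y hD.pos, sum_filter, ← sum_sub_distrib,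
    ← sum_sub_distrib]
  refine dvd_sum fun c _ => ?_
  obtain hc | hc := le_or_gt #{t | c t < D} i
  · have hcorank_c (F : Finset (Fin n)) (hF : ∀ t ∉ F, c t < f univ) : f univ ≤ f F + 1 := by
      have hsub : Fᶜ ⊆ ({t | c t < D} : Finset (Fin n)) := fun t ht => by
        simpa using (hF t (mem_compl.1 ht)).trans hD
      exact hcorank F ((card_le_card hsub).trans hc)
    have hzero : (if IsSpanning f c then vecWeight y D c else 0) -
        (vecWeight y D c - vecWeight y D c * #{H ∈ hyperplanes f | ∀ t ∉ H, c t = 0}) = 0 := by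
      rw [card_hyperplanes_eq_zero_off hf hcorank_c]
      split_ifs <;> simp
    rw [hzero]
    exact dvd_zero _
  · have hdvd := (pow_dvd_pow y hc).trans (pow_card_dvd_vecWeight y D c)
    refine dvd_sub ?_ (dvd_sub hdvd (hdvd.mul_right _))
    split_ifs
    exacts [hdvd, dvd_zero _]

lemma exteriorPoly_eq_sum_card_compl :
    exteriorPoly n f = ∑ a ∈ polyBases n f, X ^ #(extAct n f a)ᶜ := by
  simp only [exteriorPoly, card_compl, Fintype.card_fin]

lemma Hset_eq_filter_hyperplanes (j : ℕ) : Hset n f j = {H ∈ hyperplanes f | #Hᶜ = j} := by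
  ext H
  simp only [Hset, hyperplanes, mem_filter, mem_univ, true_and, card_compl, Fintype.card_fin,
    and_assoc]
  grind

lemma coeff_sum_hyperplanes (j : ℕ) :
    (∑ H ∈ hyperplanes f, X ^ #Hᶜ : ℤ[X]).coeff j = #(Hset n f j) := by
  simp only [finsetSum_coeff, coeff_X_pow, sum_boole, Hset_eq_filter_hyperplanes, eq_comm]

lemma rank_univ_lt_of_card_compl_lt_rk {k : ℕ} {F : Finset (Fin n)} (hF : #Fᶜ < rk n f k) :
    f univ < f F + k := by
  by_contra! hle
  refine Nat.notMem_of_lt_sInf hF ⟨F, by omega, ?_⟩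
  rw [card_compl, Fintype.card_fin]

end Polymatroid

/-- For a polymatroid `P ⊆ ℤ^n_{≥0}` with rank function `f` and every
`0 ≤ i < r_2(P)`, the coefficient of `y^i` in the exterior polynomial is
`C(f([n])+i-1, i) - ∑_{j=0}^{i} C(f([n])+i-1-j, i-j) * |H_j(P)|`. -/
theorem stmt0 (n : ℕ) (f : Finset (Fin n) → ℕ) (hf : IsPolymatroidRank n f)
    (i : ℕ) (hi : i < rk n f 2) :
    (exteriorPoly n f).coeff i =
      ((f Finset.univ + i - 1).choose i : ℤ) -
        ∑ j ∈ Finset.range (i + 1),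
          ((f Finset.univ + i - 1 - j).choose (i - j) : ℤ) * ((Hset n f j).card : ℤ) := by
  have hcorank (F : Finset (Fin n)) (hF : #Fᶜ ≤ i) : f univ ≤ f F + 1 :=
    Nat.le_of_lt_succ (rank_univ_lt_of_card_compl_lt_rk (hF.trans_lt hi))
  have hdvd := pow_succ_dvd_one_sub_pow_mul_sum_sub (X : ℤ[X]) hf hcorank
  rw [← exteriorPoly_eq_sum_card_compl] at hdvd
  have hchoose (j : ℕ) (hj : j ∈ range (i + 1)) :
      (f univ).multichoose (i - j) = (f univ + i - 1 - j).choose (i - j) := by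
    rw [Nat.multichoose_eq, show f univ + (i - j) - 1 = f univ + i - 1 - j by grind]
  calc (exteriorPoly n f).coeff i
      = ∑ j ∈ range (i + 1), ((if j = 0 then 1 else 0) - (#(Hset n f j) : ℤ)) *
          (f univ).multichoose (i - j) := by
        simp only [coeff_eq_sum_mul_multichoose_of_dvd hdvd, coeff_sub, coeff_one,
          coeff_sum_hyperplanes]
    _ = ∑ j ∈ range (i + 1), ((if j = 0 then 1 else 0) - (#(Hset n f j) : ℤ)) *
          (f univ + i - 1 - j).choose (i - j) :=
        sum_congr rfl fun j hj => by rw [hchoose j hj]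
    _ = _ := by simp [sub_mul, mul_comm]
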